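/- Let U = U[0]...U[m-1] be a string of length m ≥ 2 over a linearly ordered alphabet such that the end marker $ = U[m-1] is strictly smaller than every other symbol occurring in U and occurs only at position m-1. Let c be a symbol with c ≠ $, and let S = cU be the string of length m+1 obtained by prepending c to U. Let p be the unique index with BWT(U)[p] = $, and let r = |{ j : 1 ≤ j ≤ m, S_j <_lex S }| be the lexicographic rank of S among its own suffixes. Then BWT(S) is the string of length m+1 obtained from BWT(U) by replacing the symbol at position p with c and then inserting the symbol $ at position r (shifting the symbols at positions r, r+1, ... one place to the right). -/

import Mathlib

/-!
Prepending a symbol to `U` adds a single new suffix, `S` itself, and leaves the relative order of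
the others unchanged. The suffix array of `S` is therefore that of `U`, shifted by one, with the
entry `0` inserted at the rank of `S`. The symbol preceding a suffix changes only for the suffix
`U`, which used to be preceded cyclically by `$` and is now preceded by `c`; the new suffix `S`
is the one preceded cyclically by `$`.
-/

/-- The suffix `X[i..n-1]` of the string of length `n` represented by `X : ℕ → α`. -/
def suffixAt {α : Type*} (X : ℕ → α) (n i : ℕ) : List α :=
  (List.range (n - i)).map (fun k => X (i + k))

theorem eq_succAbove_of_strictMono {n : ℕ} {e : Fin n → Fin (n + 1)} (he : StrictMono e)
    {z : Fin (n + 1)} (hz : ∀ i, e i ≠ z) : e = z.succAbove := by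
  choose f hf using fun i => Fin.exists_succAbove_eq (hz i)
  have f_mono : StrictMono f := fun a b hab => by
    simpa only [← (Fin.strictMono_succAbove z).lt_iff_lt, hf] using he hab
  funext i
  rw [← hf, f_mono.eq_id, id]

section OfFn

variable {α : Type*} {n : ℕ}

theorem ofFn_update (f : Fin n → α) (p : Fin n) (a : α) :
    List.ofFn (Function.update f p a) = (List.ofFn f).set p a := by
  simp [List.ofFn_eq_map, (List.nodup_finRange n).map_update]

theorem ofFn_insertNth (i : Fin (n + 1)) (a : α) (f : Fin n → α) :
    List.ofFn (i.insertNth (α := fun _ => α) a f) = (List.ofFn f).insertIdx i a := by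
  induction n with
  | zero => simp [Fin.fin_one_eq_zero i]
  | succ n ih =>
    cases i using Fin.cases with
    | zero => simp
    | succ i =>
      rw [← Fin.cons_self_tail f, Fin.insertNth_succ_cons, List.ofFn_cons, List.ofFn_cons, ih]
      simp

end OfFn

section SuffixArray

variable {α : Type*} {lt : α → α → Prop} {X S U : ℕ → α} {n m : ℕ}

theorem suffixAt_succ (hS : ∀ k, S (k + 1) = U k) (i : ℕ) :
    suffixAt S (m + 1) (i + 1) = suffixAt U m i := by
  simp [suffixAt, Nat.add_right_comm i 1, hS]

/-- The permutation `sa` is the suffix array of the string `X[0..n-1]`: it lists the starting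
positions of the suffixes in increasing lexicographic order with respect to `lt`. -/
def IsSuffixArray (lt : α → α → Prop) (X : ℕ → α) (n : ℕ) (sa : Equiv.Perm (Fin n)) : Prop :=
  ∀ a b : Fin n, a < b → List.Lex lt (suffixAt X n (sa a)) (suffixAt X n (sa b))

namespace IsSuffixArray

variable [Std.Asymm lt]

theorem lex_iff {sa : Equiv.Perm (Fin n)} (h : IsSuffixArray lt X n sa) {a b : Fin n} :
    List.Lex lt (suffixAt X n (sa a)) (suffixAt X n (sa b)) ↔ a < b :=
  (RelEmbedding.ofMonotone (r := (· < ·)) (s := List.Lex lt) _ h).map_rel_iff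

theorem ncard_suffix_lt {sa : Equiv.Perm (Fin n)} (h : IsSuffixArray lt X n sa) (i : Fin n) :
    {j | j < n ∧ List.Lex lt (suffixAt X n j) (suffixAt X n (sa i))}.ncard = i := by
  have image_Iio : {j | j < n ∧ List.Lex lt (suffixAt X n j) (suffixAt X n (sa i))} =
      (Fin.val ∘ sa) '' Set.Iio i := by
    ext j
    constructor
    · rintro ⟨hj, hlt⟩
      obtain ⟨k, hk⟩ := sa.surjective ⟨j, hj⟩
      obtain rfl : (sa k : ℕ) = j := congrArg Fin.val hk
      exact ⟨k, h.lex_iff.mp hlt, rfl⟩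
    · rintro ⟨k, hk, rfl⟩
      exact ⟨(sa k).isLt, h.lex_iff.mpr hk⟩
  rw [image_Iio, Set.ncard_image_of_injective _ (Fin.val_injective.comp sa.injective),
    ← Finset.coe_Iio, Set.ncard_coe_finset, Fin.card_Iio]

variable {saU : Equiv.Perm (Fin m)} {saS : Equiv.Perm (Fin (m + 1))}

theorem apply_succAbove (hsaU : IsSuffixArray lt U m saU) (hsaS : IsSuffixArray lt S (m + 1) saS)
    (hS : ∀ k, S (k + 1) = U k) {z : Fin (m + 1)} (hz : saS z = 0) (i : Fin m) :
    saS (z.succAbove i) = (saU i).succ := by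
  have position_strictMono : StrictMono fun i => saS.symm (saU i).succ := fun a b hab => by
    rw [← hsaS.lex_iff]
    simpa [suffixAt_succ hS] using hsaU a b hab
  have position_ne (i : Fin m) : saS.symm (saU i).succ ≠ z := by
    simp [Equiv.symm_apply_eq, hz, Fin.succ_ne_zero]
  rw [← eq_succAbove_of_strictMono position_strictMono position_ne, Equiv.apply_symm_apply]

end IsSuffixArray

/-- The Burrows–Wheeler transform of the string `X[0..n-1]` with suffix array `sa`: its `i`-th
symbol is the one preceding the `i`-th smallest suffix. The predecessor of position `0` is taken
cyclically, which gives the end marker `X[n-1]`. -/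
def bwt (X : ℕ → α) (n : ℕ) (sa : Equiv.Perm (Fin n)) (i : Fin n) : α :=
  if (sa i : ℕ) = 0 then X (n - 1) else X (sa i - 1)

theorem bwt_eq_last_iff (hX : ∀ k < n - 1, X k ≠ X (n - 1)) {sa : Equiv.Perm (Fin n)}
    {i : Fin n} : bwt X n sa i = X (n - 1) ↔ (sa i : ℕ) = 0 := by
  refine ⟨fun h => ?_, fun h => by simp [bwt, h]⟩
  by_contra hi
  rw [bwt, if_neg hi] at h
  exact hX _ (by lia) h

variable [Std.Asymm lt] {saU : Equiv.Perm (Fin m)} {saS : Equiv.Perm (Fin (m + 1))}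

theorem bwt_eq_insertNth_update (hS : ∀ k, S (k + 1) = U k) (hsaU : IsSuffixArray lt U m saU)
    (hsaS : IsSuffixArray lt S (m + 1) saS) {p : Fin m} (hp : (saU p : ℕ) = 0)
    {z : Fin (m + 1)} (hz : saS z = 0) :
    bwt S (m + 1) saS =
      z.insertNth (α := fun _ => α) (S m) (Function.update (bwt U m saU) p (S 0)) := by
  refine Fin.eq_insertNth_iff.mpr ⟨by simp [bwt, hz], ?_⟩
  funext i
  have bwt_succAbove : bwt S (m + 1) saS (z.succAbove i) = S (saU i) := by
    simp [bwt, hsaU.apply_succAbove hsaS hS hz]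
  rw [Fin.removeNth_apply, bwt_succAbove]
  obtain rfl | hip := eq_or_ne i p
  · rw [hp, Function.update_self]
  · have saU_ne_zero : (saU i : ℕ) ≠ 0 := fun h =>
      hip (saU.injective (Fin.ext (h.trans hp.symm)))
    rw [Function.update_of_ne hip, bwt, if_neg saU_ne_zero, ← hS,
      Nat.sub_add_cancel (Nat.pos_of_ne_zero saU_ne_zero)]

theorem inplace_bwt_step_general (hS : ∀ k, S (k + 1) = U k) (hsaU : IsSuffixArray lt U m saU)
    (hsaS : IsSuffixArray lt S (m + 1) saS) {p : Fin m} (hp : (saU p : ℕ) = 0) {r : ℕ}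
    (hr : r = Set.ncard {j : ℕ | 1 ≤ j ∧ j ≤ m ∧
      List.Lex lt (suffixAt S (m + 1) j) (suffixAt S (m + 1) 0)}) :
    List.ofFn (bwt S (m + 1) saS) =
      ((List.ofFn (bwt U m saU)).set p (S 0)).insertIdx r (U (m - 1)) := by
  obtain ⟨z, hz⟩ := saS.surjective 0
  have rank_eq : r = z := by
    rw [hr, ← hsaS.ncard_suffix_lt z, hz]
    congr! 3 with j
    have pos_of_lex : List.Lex lt (suffixAt S (m + 1) j) (suffixAt S (m + 1) 0) → 1 ≤ j :=
      fun h => Nat.one_le_iff_ne_zero.mpr fun hj => irrefl _ (hj ▸ h)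
    grind
  have last_eq : S m = U (m - 1) := by
    rw [← hS, Nat.sub_add_cancel p.pos]
  rw [bwt_eq_insertNth_update hS hsaU hsaS hp hz, ofFn_insertNth, ofFn_update, rank_eq, last_eq]

end SuffixArray

/-- (Correctness of Steps 1–4 of the in-place BWT algorithm.)
Let `U` be a string of length `m ≥ 2` with end marker `$ = U[m-1]` (strictly smallest,
occurring only at the last position), let `c ≠ $` and `S = cU`. Let `p` be the unique
position of `$` in `BWT(U)` and `r` the lexicographic rank of `S` among its own
suffixes. Then `BWT(S)` is obtained from `BWT(U)` by writing `c` at position `p`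
and then inserting `$` at position `r`. -/
theorem inplace_bwt_step {α : Type*} [LinearOrder α]
    (U : ℕ → α) (m : ℕ) (hm : 2 ≤ m)
    (hend : ∀ k, k < m - 1 → U (m - 1) < U k)
    (c : α) (hc : c ≠ U (m - 1))
    (S : ℕ → α) (hS : ∀ k, S k = if k = 0 then c else U (k - 1))
    (saU : Equiv.Perm (Fin m))
    (hsaU : ∀ a b : Fin m, a < b →
      List.Lex (· < ·) (suffixAt U m (saU a)) (suffixAt U m (saU b)))
    (bwtU : Fin m → α)
    (hbwtU : ∀ i : Fin m,
      bwtU i = if (saU i : ℕ) = 0 then U (m - 1) else U ((saU i : ℕ) - 1))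
    (saS : Equiv.Perm (Fin (m + 1)))
    (hsaS : ∀ a b : Fin (m + 1), a < b →
      List.Lex (· < ·) (suffixAt S (m + 1) (saS a)) (suffixAt S (m + 1) (saS b)))
    (bwtS : Fin (m + 1) → α)
    (hbwtS : ∀ i : Fin (m + 1),
      bwtS i = if (saS i : ℕ) = 0 then S m else S ((saS i : ℕ) - 1))
    (p : Fin m) (hp : bwtU p = U (m - 1))
    (r : ℕ)
    (hr : r = Set.ncard {j : ℕ | 1 ≤ j ∧ j ≤ m ∧
      List.Lex (· < ·) (suffixAt S (m + 1) j) (suffixAt S (m + 1) 0)}) :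
    List.ofFn bwtS = ((List.ofFn bwtU).set p c).insertIdx r (U (m - 1)) := by
  obtain ⟨rfl, rfl⟩ : bwtU = bwt U m saU ∧ bwtS = bwt S (m + 1) saS := ⟨funext hbwtU, funext hbwtS⟩
  simpa [hS] using inplace_bwt_step_general (fun k => by simp [hS]) hsaU hsaS
    ((bwt_eq_last_iff fun k hk => (hend k hk).ne').mp hp) hr
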